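/- Let Y be an exponential random variable with rate 1 and let X be a nonnegative real random variable independent of Y; let C > 0 be real. Define erfc(x) = (2/√π) ∫_x^∞ e^{−t²} dt. Then E[ erfc²( √( Y / (X + C) ) ) ] = 1 − (2/√π) ∫_0^∞ z^{−1/2} e^{−z(1 + C)} erfc(√z) E[e^{−z X}] dz. -/

import Mathlib

/-!
Conditionally on `X = x`, put `a = x + C > 0`. Substituting `y = a z`,
`E[erfc²(√(Y/a))] = ∫_0^∞ a e^{-az} erfc²(√z) dz`, and integrating by parts this is
`1 + ∫_0^∞ e^{-az} (erfc²(√z))' dz`, where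
`(erfc²(√z))' = -(2/√π) z^{-1/2} e^{-z} erfc(√z)` (`integral_exp_erfc_sq`).
Averaging over `X`, which is independent of `Y`, and exchanging the two integrals
(the integrand is dominated by `z^{-1/2} e^{-z}`) gives the Laplace transform of `X` on the right.
-/

open MeasureTheory ProbabilityTheory Real

/-- The complementary error function `erfc x = (2/√π) ∫_x^∞ e^{−t²} dt`. -/
noncomputable def erfc (x : ℝ) : ℝ :=
  (2 / Real.sqrt π) * ∫ t in Set.Ioi x, Real.exp (-t ^ 2)

lemma integrable_exp_neg_sq : Integrable (fun t : ℝ => Real.exp (-t ^ 2)) := by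
  simpa using integrable_exp_neg_mul_sq (b := 1) one_pos

lemma erfc_eq (x : ℝ) :
    erfc x = erfc 0 - (2 / Real.sqrt π) * ∫ t in (0:ℝ)..x, Real.exp (-t ^ 2) := by
  have h := intervalIntegral.integral_interval_add_Ioi (a := 0) (b := x)
    integrable_exp_neg_sq.integrableOn integrable_exp_neg_sq.integrableOn
  unfold erfc
  rw [← h]
  ring

lemma erfc_zero : erfc 0 = 1 := by
  have h := integral_gaussian_Ioi 1
  simp only [neg_mul, one_mul, div_one] at h
  have hp : Real.sqrt π ≠ 0 := by positivity
  rw [erfc, h]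
  field_simp

lemma hasDerivAt_erfc (x : ℝ) :
    HasDerivAt erfc (-((2 / Real.sqrt π) * Real.exp (-x ^ 2))) x := by
  have hc : Continuous fun t : ℝ => Real.exp (-t ^ 2) := by fun_prop
  have h := ((hc.integral_hasStrictDerivAt 0 x).hasDerivAt.const_mul
    (2 / Real.sqrt π)).const_sub (erfc 0)
  exact h.congr_of_eventuallyEq (Filter.Eventually.of_forall erfc_eq)

lemma continuous_erfc : Continuous erfc :=
  continuous_iff_continuousAt.2 fun x => (hasDerivAt_erfc x).continuousAt

lemma erfc_nonneg (x : ℝ) : 0 ≤ erfc x :=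
  mul_nonneg (by positivity) (integral_nonneg fun t => (Real.exp_pos _).le)

lemma erfc_le_one {x : ℝ} (hx : 0 ≤ x) : erfc x ≤ 1 := by
  rw [erfc_eq, erfc_zero]
  have : 0 ≤ ∫ t in (0:ℝ)..x, Real.exp (-t ^ 2) :=
    intervalIntegral.integral_nonneg hx fun t _ => (Real.exp_pos _).le
  have h2 : 0 ≤ 2 / Real.sqrt π := by positivity
  nlinarith [mul_nonneg h2 this]

lemma erfc_sqrt_sq_le_one (z : ℝ) : erfc (Real.sqrt z) ^ 2 ≤ 1 :=
  pow_le_one₀ (erfc_nonneg _) (erfc_le_one (Real.sqrt_nonneg z))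

lemma hasDerivAt_erfc_sqrt_sq {z : ℝ} (hz : 0 < z) :
    HasDerivAt (fun z => erfc (Real.sqrt z) ^ 2)
      (-((2 / Real.sqrt π) * (z ^ (-(1/2) : ℝ) * Real.exp (-z) * erfc (Real.sqrt z)))) z := by
  have h := ((hasDerivAt_erfc (Real.sqrt z)).comp z (Real.hasDerivAt_sqrt hz.ne')).pow 2
  refine h.congr_deriv ?_
  rw [Real.rpow_neg hz.le, ← Real.sqrt_eq_rpow, Real.sq_sqrt hz.le]
  have : Real.sqrt z ≠ 0 := by positivity
  simp only [Function.comp]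
  field_simp
  norm_num

lemma integrableOn_rpow_exp :
    IntegrableOn (fun z : ℝ => z ^ (-(1/2) : ℝ) * Real.exp (-z)) (Set.Ioi 0) := by
  simpa using integrableOn_rpow_mul_exp_neg_mul_rpow (p := 1) (s := -(1/2)) (b := 1)
    (by norm_num) one_pos one_pos

lemma norm_kernel_le {a z : ℝ} (ha : 0 ≤ a) (hz : 0 < z) :
    ‖z ^ (-(1/2) : ℝ) * Real.exp (-z) * erfc (Real.sqrt z) * Real.exp (-z * a)‖
      ≤ z ^ (-(1/2) : ℝ) * Real.exp (-z) := by
  have h1 : 0 ≤ z ^ (-(1/2) : ℝ) * Real.exp (-z) := by positivity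
  have h2 : Real.exp (-z * a) ≤ 1 := Real.exp_le_one_iff.2 (by nlinarith)
  have h3 := erfc_le_one (Real.sqrt_nonneg z)
  have h4 := erfc_nonneg (Real.sqrt z)
  rw [Real.norm_of_nonneg (by positivity), mul_assoc]
  exact mul_le_of_le_one_right h1 (mul_le_one₀ h3 (Real.exp_pos _).le h2)

lemma integrableOn_kernel {a : ℝ} (ha : 0 ≤ a) :
    IntegrableOn (fun z : ℝ =>
      z ^ (-(1/2) : ℝ) * Real.exp (-z) * erfc (Real.sqrt z) * Real.exp (-z * a)) (Set.Ioi 0) := by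
  have hm := continuous_erfc.measurable
  refine Integrable.mono' integrableOn_rpow_exp (by fun_prop) ?_
  filter_upwards [ae_restrict_mem measurableSet_Ioi] with z hz
  exact norm_kernel_le ha hz

/-- Integration by parts against the exponential density of rate `a`. -/
lemma integral_exp_erfc_sq {a : ℝ} (ha : 0 < a) :
    ∫ z in Set.Ioi (0:ℝ), a * Real.exp (-z * a) * erfc (Real.sqrt z) ^ 2 =
      1 - (2 / Real.sqrt π) * ∫ z in Set.Ioi (0:ℝ),
        z ^ (-(1/2) : ℝ) * Real.exp (-z) * erfc (Real.sqrt z) * Real.exp (-z * a) := by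
  have hc := continuous_erfc
  have hm := hc.measurable
  have hexp : IntegrableOn (fun z : ℝ => a * Real.exp (-z * a)) (Set.Ioi 0) := by
    have := (integrableOn_exp_mul_Ioi (neg_lt_zero.2 ha) 0).const_mul a
    refine this.congr (Filter.Eventually.of_forall fun z => ?_)
    simp [mul_comm]
  have hI1 : IntegrableOn
      (fun z : ℝ => a * Real.exp (-z * a) * erfc (Real.sqrt z) ^ 2) (Set.Ioi 0) := by
    refine Integrable.mono' hexp (by fun_prop) (Filter.Eventually.of_forall fun z => ?_)
    rw [Real.norm_of_nonneg (by positivity)]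
    exact mul_le_of_le_one_right (by positivity) (erfc_sqrt_sq_le_one z)
  have hI2 := (integrableOn_kernel ha.le).const_mul (2 / Real.sqrt π)
  -- The antiderivative is `-e^{-az} erfc²(√z)`, equal to `-1` at `0` and vanishing at infinity.
  have hd : ∀ z ∈ Set.Ioi (0:ℝ),
      HasDerivAt (fun z => -(Real.exp (-z * a) * erfc (Real.sqrt z) ^ 2))
      (a * Real.exp (-z * a) * erfc (Real.sqrt z) ^ 2 + (2 / Real.sqrt π) *
        (z ^ (-(1/2) : ℝ) * Real.exp (-z) * erfc (Real.sqrt z) * Real.exp (-z * a))) z := by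
    intro z hz
    have h1 : HasDerivAt (fun z : ℝ => Real.exp (-z * a)) (Real.exp (-z * a) * (-1 * a)) z :=
      (((hasDerivAt_id z).neg).mul_const a).exp
    refine (h1.mul (hasDerivAt_erfc_sqrt_sq hz)).neg.congr_deriv ?_
    ring
  have htend : Filter.Tendsto (fun z => -(Real.exp (-z * a) * erfc (Real.sqrt z) ^ 2))
      Filter.atTop (nhds 0) := by
    have h0 : Filter.Tendsto (fun z : ℝ => Real.exp (-z * a)) Filter.atTop (nhds 0) := by
      refine Real.tendsto_exp_atBot.comp ?_
      exact Filter.Tendsto.atBot_mul_const ha Filter.tendsto_neg_atTop_atBot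
    have h1 : Filter.Tendsto (fun z => Real.exp (-z * a) * erfc (Real.sqrt z) ^ 2)
        Filter.atTop (nhds 0) := by
      refine squeeze_zero (fun z => by positivity) (fun z => ?_) h0
      exact mul_le_of_le_one_right (Real.exp_pos _).le (erfc_sqrt_sq_le_one z)
    simpa using h1.neg
  have hcont : ContinuousWithinAt
      (fun z => -(Real.exp (-z * a) * erfc (Real.sqrt z) ^ 2)) (Set.Ici 0) 0 := by
    have : Continuous (fun z => -(Real.exp (-z * a) * erfc (Real.sqrt z) ^ 2)) := by fun_prop
    exact this.continuousWithinAt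
  have key := integral_Ioi_of_hasDerivAt_of_tendsto hcont hd (hI1.add hI2) htend
  rw [integral_add hI1 hI2, integral_const_mul] at key
  simp only [neg_zero, zero_mul, Real.exp_zero, Real.sqrt_zero, erfc_zero] at key
  linarith

lemma integral_expMeasure_one (f : ℝ → ℝ) :
    ∫ y, f y ∂(expMeasure 1) = ∫ y in Set.Ioi (0:ℝ), Real.exp (-y) * f y := by
  have hpdf : Measurable (exponentialPDF 1) :=
    (measurable_exponentialPDFReal 1).ennreal_ofReal
  have : expMeasure 1 = volume.withDensity (exponentialPDF 1) := rfl
  rw [this, integral_withDensity_eq_integral_toReal_smul hpdf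
    (Filter.Eventually.of_forall fun x => ENNReal.ofReal_lt_top), ← integral_Ici_eq_integral_Ioi,
    ← integral_indicator measurableSet_Ici]
  congr 1
  ext y
  by_cases hy : 0 ≤ y
  · rw [Set.indicator_of_mem (Set.mem_Ici.2 hy), exponentialPDF_of_nonneg hy,
      ENNReal.toReal_ofReal (by positivity)]
    simp
  · rw [Set.indicator_of_notMem (by simpa using hy), exponentialPDF_of_neg (not_le.1 hy)]
    simp

/-- The expectation conditional on the denominator `X + C` being equal to `a`. -/
lemma integral_expMeasure_erfc_sq {a : ℝ} (ha : 0 < a) :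
    ∫ y, erfc (Real.sqrt (y / a)) ^ 2 ∂(expMeasure 1) =
      1 - (2 / Real.sqrt π) * ∫ z in Set.Ioi (0:ℝ),
        z ^ (-(1/2) : ℝ) * Real.exp (-z) * erfc (Real.sqrt z) * Real.exp (-z * a) := by
  rw [← integral_exp_erfc_sq ha, integral_expMeasure_one]
  have h := integral_comp_mul_left_Ioi
    (fun y => Real.exp (-y) * erfc (Real.sqrt (y / a)) ^ 2) 0 ha
  rw [mul_zero, smul_eq_mul] at h
  rw [eq_comm, ← mul_right_inj' (inv_ne_zero ha.ne'), ← h, ← integral_const_mul]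
  congr 1
  ext z
  rw [mul_div_cancel_left₀ z ha.ne', neg_mul, mul_comm a z]
  field_simp

/-- Hamdi's lemma (squared-erfc, `m = 1` case): for `Y` unit-rate exponential, `X ≥ 0`
independent of `Y`, and `C > 0`,
`E[erfc²(√(Y/(X+C)))] = 1 − (2/√π) ∫_0^∞ z^{−1/2} e^{−z(1+C)} erfc(√z) E[e^{−zX}] dz`. -/
theorem stmt10 {Ω : Type*} [MeasurableSpace Ω] (μ : Measure Ω) [IsProbabilityMeasure μ]
    (Y X : Ω → ℝ) (hY : Measurable Y) (hX : Measurable X)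
    (hYexp : μ.map Y = expMeasure 1)
    (hXnonneg : ∀ ω, 0 ≤ X ω)
    (hindep : IndepFun Y X μ)
    (C : ℝ) (hC : 0 < C) :
    ∫ ω, (erfc (Real.sqrt (Y ω / (X ω + C)))) ^ 2 ∂μ =
      1 - (2 / Real.sqrt π) * ∫ z in Set.Ioi (0:ℝ),
        z ^ (-(1/2) : ℝ) * Real.exp (-z * (1 + C)) * erfc (Real.sqrt z) *
          ∫ ω, Real.exp (-z * X ω) ∂μ := by
  have hm := continuous_erfc.measurable
  have hYp : IsProbabilityMeasure (μ.map Y) := Measure.isProbabilityMeasure_map hY.aemeasurable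
  have hXp : IsProbabilityMeasure (μ.map X) := Measure.isProbabilityMeasure_map hX.aemeasurable
  have hprod := (indepFun_iff_map_prod_eq_prod_map_map hY.aemeasurable hX.aemeasurable).1 hindep
  have hF : Measurable (fun p : ℝ × ℝ => erfc (Real.sqrt (p.1 / (p.2 + C))) ^ 2) := by
    fun_prop
  have hFi : Integrable (fun p : ℝ × ℝ => erfc (Real.sqrt (p.1 / (p.2 + C))) ^ 2)
      ((μ.map Y).prod (μ.map X)) := by
    refine Integrable.of_bound hF.aestronglyMeasurable 1 (Filter.Eventually.of_forall fun p => ?_)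
    rw [Real.norm_of_nonneg (by positivity)]
    exact erfc_sqrt_sq_le_one _
  have h1 : ∫ ω, (erfc (Real.sqrt (Y ω / (X ω + C)))) ^ 2 ∂μ =
      ∫ ω, (∫ y, erfc (Real.sqrt (y / (X ω + C))) ^ 2 ∂(expMeasure 1)) ∂μ := by
    have e1 := integral_map (μ := μ) (hY.prodMk hX).aemeasurable
      (hF.aestronglyMeasurable (μ := μ.map fun ω => (Y ω, X ω)))
    have e2 := integral_map (μ := μ) hX.aemeasurable
      (f := fun x => ∫ y, erfc (Real.sqrt (y / (x + C))) ^ 2 ∂(μ.map Y))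
      hFi.integral_prod_right.aestronglyMeasurable
    rw [← e1, hprod, integral_prod_symm _ hFi, e2, hYexp]
  have hK : Integrable (Function.uncurry fun (ω : Ω) (z : ℝ) =>
      z ^ (-(1/2) : ℝ) * Real.exp (-z) * erfc (Real.sqrt z) * Real.exp (-z * (X ω + C)))
      (μ.prod (volume.restrict (Set.Ioi (0:ℝ)))) := by
    have G : Integrable (fun p : Ω × ℝ => p.2 ^ (-(1/2) : ℝ) * Real.exp (-p.2))
        (μ.prod (volume.restrict (Set.Ioi (0:ℝ)))) :=
      Integrable.comp_snd integrableOn_rpow_exp μ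
    refine Integrable.mono' G (Measurable.aestronglyMeasurable ?_) ?_
    · unfold Function.uncurry
      fun_prop
    · have hpos : ∀ᵐ p : Ω × ℝ ∂(μ.prod (volume.restrict (Set.Ioi (0:ℝ)))), 0 < p.2 :=
        Measure.quasiMeasurePreserving_snd.ae (ae_restrict_mem measurableSet_Ioi)
      filter_upwards [hpos] with p hp
      exact norm_kernel_le (add_nonneg (hXnonneg p.1) hC.le) hp
  have hKi := hK.integral_prod_left
  simp only [Function.uncurry_apply_pair] at hKi
  rw [h1, integral_congr_ae (Filter.Eventually.of_forall fun ω =>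
    integral_expMeasure_erfc_sq (add_pos_of_nonneg_of_pos (hXnonneg ω) hC)),
    integral_sub (integrable_const _) (hKi.const_mul _), integral_const_mul,
    integral_integral_swap hK]
  simp only [integral_const, probReal_univ, smul_eq_mul, mul_one]
  congr 3
  ext z
  rw [← integral_const_mul]
  congr 1
  ext ω
  have : Real.exp (-z) * Real.exp (-z * (X ω + C)) =
      Real.exp (-z * (1 + C)) * Real.exp (-z * X ω) := by
    rw [← Real.exp_add, ← Real.exp_add]
    ring_nf
  linear_combination (z ^ (-(1/2) : ℝ) * erfc (Real.sqrt z)) * this
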